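/- For every finite simple connected graph G, the largest adjacency eigenvalue λ₁(G) satisfies λ₁(G) ≤ ∑_{v ∈ V(G)} (1 − 1/c(v)). -/

import Mathlib

open scoped Classical
open Finset

variable {V : Type*}

noncomputable def adjMx [Fintype V] (G : SimpleGraph V) : Matrix V V ℝ :=
  Matrix.of fun u v => if G.Adj u v then 1 else 0

noncomputable def degMx [Fintype V] [DecidableEq V] (G : SimpleGraph V) : Matrix V V ℝ :=
  Matrix.diagonal fun v => ∑ u, if G.Adj v u then (1 : ℝ) else 0

noncomputable def signlessLap [Fintype V] [DecidableEq V] (G : SimpleGraph V) : Matrix V V ℝ :=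
  degMx G + adjMx G

lemma adjMx_isHermitian [Fintype V] (G : SimpleGraph V) : (adjMx G).IsHermitian := by
  ext u v
  simp [adjMx, Matrix.conjTranspose_apply, SimpleGraph.adj_comm]

lemma signlessLap_isHermitian [Fintype V] [DecidableEq V] (G : SimpleGraph V) :
    (signlessLap G).IsHermitian :=
  (Matrix.isHermitian_diagonal _).add (adjMx_isHermitian G)

noncomputable def maxEig [Fintype V] [DecidableEq V] {A : Matrix V V ℝ}
    (hA : A.IsHermitian) : ℝ := ⨆ v, hA.eigenvalues v

noncomputable def qIndex [Fintype V] [DecidableEq V] (G : SimpleGraph V) : ℝ :=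
  maxEig (signlessLap_isHermitian G)

noncomputable def lambda1 [Fintype V] [DecidableEq V] (G : SimpleGraph V) : ℝ :=
  maxEig (adjMx_isHermitian G)

/-- Maximum size of a clique of `G` containing vertex `v`. -/
noncomputable def cliqueAt (G : SimpleGraph V) (v : V) : ℕ :=
  sSup {n | ∃ s : Finset V, G.IsNClique n s ∧ v ∈ s}

/-- Maximum size of a clique of `G` containing both `u` and `v`. -/
noncomputable def cliqueAtEdge (G : SimpleGraph V) (u v : V) : ℕ :=
  sSup {n | ∃ s : Finset V, G.IsNClique n s ∧ u ∈ s ∧ v ∈ s}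

open Matrix in
/-- Weighted Motzkin-Straus by shifting weight between nonadjacent vertices. -/
lemma ms_shift {V : Type*} [Fintype V] [DecidableEq V] (G : SimpleGraph V) (M : Matrix V V ℝ)
    (hs : ∀ u v, M u v = M v u) (h0 : ∀ u v, ¬ G.Adj u v → M u v = 0)
    (hK : ∀ y : V → ℝ, (∀ v, 0 ≤ y v) →
      (∀ u v, y u ≠ 0 → y v ≠ 0 → u ≠ v → G.Adj u v) → y ⬝ᵥ (M *ᵥ y) ≤ (∑ v, y v) ^ 2) :
    ∀ (n : ℕ) (y : V → ℝ), (∀ v, 0 ≤ y v) → (univ.filter fun v => y v ≠ 0).card ≤ n →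
      y ⬝ᵥ (M *ᵥ y) ≤ (∑ v, y v) ^ 2 := by
  intro n
  induction n with
  | zero =>
    intro y hy hc
    apply hK y hy
    intro u v hu
    have : u ∈ univ.filter fun v => y v ≠ 0 := by simp [hu]
    rw [Finset.card_eq_zero.mp (Nat.le_zero.mp hc)] at this
    simp at this
  | succ n ih =>
    intro y hy hc
    by_cases hcl : ∀ u v, y u ≠ 0 → y v ≠ 0 → u ≠ v → G.Adj u v
    · exact hK y hy hcl
    push Not at hcl
    obtain ⟨u, v, hu, hv, huv, hadj⟩ := hcl
    have key : ∀ u v, y u ≠ 0 → y v ≠ 0 → u ≠ v → ¬ G.Adj u v →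
        (M *ᵥ y) v ≤ (M *ᵥ y) u → y ⬝ᵥ (M *ᵥ y) ≤ (∑ v, y v) ^ 2 := by
      intro u v hu hv huv hadj hle
      have hMd : ∀ a, M a a = 0 := fun a => h0 a a (G.loopless.irrefl a)
      have hMuv : M u v = 0 := h0 u v hadj
      have hMvu : M v u = 0 := by rw [hs, hMuv]
      set d : V → ℝ := Pi.single u 1 - Pi.single v 1 with hd
      have hT : Mᵀ = M := by ext a b; exact hs b a
      have hz := ih (y + y v • d) ?_ ?_
      · have hsum : ∑ w, (y + y v • d) w = ∑ w, y w := by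
          simp [hd, Finset.sum_add_distrib, ← Finset.mul_sum]
        rw [hsum] at hz
        have h1 : d ⬝ᵥ (M *ᵥ y) = (M *ᵥ y) u - (M *ᵥ y) v := by
          simp [hd, sub_dotProduct]
        have h2 : y ⬝ᵥ (M *ᵥ d) = d ⬝ᵥ (M *ᵥ y) := by
          rw [dotProduct_mulVec, ← mulVec_transpose, hT, dotProduct_comm]
        have h3 : d ⬝ᵥ (M *ᵥ d) = 0 := by
          simp [hd, sub_dotProduct, mulVec_sub, hMd, hMuv, hMvu]
        have h4 : (y + y v • d) ⬝ᵥ (M *ᵥ (y + y v • d)) = y ⬝ᵥ (M *ᵥ y)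
            + 2 * y v * ((M *ᵥ y) u - (M *ᵥ y) v) := by
          rw [mulVec_add, mulVec_smul]
          simp only [add_dotProduct, dotProduct_add, smul_dotProduct, dotProduct_smul,
            h2, h3, h1, smul_eq_mul]
          ring
        rw [h4] at hz
        have := mul_nonneg (hy v) (sub_nonneg.mpr hle)
        linarith
      · intro w
        have := hy w
        have := hy v
        by_cases hwv : w = v
        · subst hwv; simp [hd, huv.symm]
        · by_cases hwu : w = u
          · subst hwu; simp [hd, huv]; linarith
          · simp [hd, hwv, hwu]; linarith
      · have : (univ.filter fun w => (y + y v • d) w ≠ 0) ⊂ univ.filter fun w => y w ≠ 0 := by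
          rw [Finset.ssubset_iff_of_subset]
          · exact ⟨v, by simp [hv], by simp [hd, huv.symm]⟩
          · intro w hw
            by_cases hwv : w = v
            · subst hwv; simp [hv]
            · by_cases hwu : w = u
              · subst hwu; simp [hu]
              · simpa [hd, hwv, hwu] using hw
        have := Finset.card_lt_card this
        omega
    rcases le_total ((M *ᵥ y) v) ((M *ᵥ y) u) with h | h
    · exact key u v hu hv huv hadj h
    · exact key v u hv hu huv.symm (fun h => hadj h.symm) h

lemma le_cliqueAt {V : Type*} [Fintype V] (G : SimpleGraph V) (s : Finset V)
    (hs : G.IsClique s) (v : V) (hv : v ∈ s) : s.card ≤ cliqueAt G v := by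
  apply le_csSup
  · refine ⟨Fintype.card V, ?_⟩
    rintro n ⟨t, ht, -⟩
    rw [← ht.card_eq]
    exact Finset.card_le_univ t
  · exact ⟨s, ⟨hs, rfl⟩, hv⟩

lemma one_sub_le {V : Type*} [Fintype V] (G : SimpleGraph V) (s : Finset V)
    (hs : G.IsClique s) (v : V) (hv : v ∈ s) :
    1 - 1 / (s.card : ℝ) ≤ 1 - 1 / (cliqueAt G v : ℝ) := by
  have h := le_cliqueAt G s hs v hv
  have hp : 0 < s.card := Finset.card_pos.mpr ⟨v, hv⟩
  have : 1 / (cliqueAt G v : ℝ) ≤ 1 / (s.card : ℝ) :=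
    one_div_le_one_div_of_le (by exact_mod_cast hp) (by exact_mod_cast h)
  linarith

lemma one_sub_nonneg' {V : Type*} [Fintype V] (G : SimpleGraph V) (v : V) :
    0 ≤ 1 - 1 / (cliqueAt G v : ℝ) := by
  have := one_sub_le G {v} (by simp) v (by simp)
  simpa using this

lemma one_sub_pos_of_adj {V : Type*} [Fintype V] (G : SimpleGraph V) (u v : V)
    (h : G.Adj u v) : 0 < 1 - 1 / (cliqueAt G u : ℝ) := by
  have h1 := one_sub_le G {u, v} (by simp [SimpleGraph.isClique_iff, Set.Pairwise, h, h.symm])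
    u (by simp)
  rw [Finset.card_pair h.ne] at h1
  norm_num at h1 ⊢
  linarith

open Matrix in
lemma quad_le {V : Type*} [Fintype V] [DecidableEq V] (G : SimpleGraph V) (x : V → ℝ)
    (hx : ∀ v, 0 ≤ x v) :
    x ⬝ᵥ (adjMx G *ᵥ x) ≤ (∑ v, √(1 - 1 / (cliqueAt G v : ℝ)) * x v) ^ 2 := by
  set s : V → ℝ := fun v => √(1 - 1 / (cliqueAt G v : ℝ)) with hsdef
  have hspos : ∀ u v, G.Adj u v → 0 < s u := fun u v h =>
    Real.sqrt_pos.mpr (one_sub_pos_of_adj G u v h)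
  have hs0 : ∀ v, 0 ≤ s v := fun v => Real.sqrt_nonneg _
  let M : Matrix V V ℝ := Matrix.of fun u v => if G.Adj u v then (s u)⁻¹ * (s v)⁻¹ else 0
  have main := ms_shift G M (by intro u v; simp [M, G.adj_comm u v, mul_comm])
    (by intro u v h; simp [M, h]) ?_ _ (fun v => s v * x v)
    (fun v => mul_nonneg (hs0 v) (hx v)) le_rfl
  · refine le_trans (le_of_eq ?_) main
    simp only [dotProduct, mulVec, Finset.mul_sum]
    refine Finset.sum_congr rfl fun u _ => Finset.sum_congr rfl fun v _ => ?_
    by_cases h : G.Adj u v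
    · have h1 := (hspos u v h).ne'
      have h2 := (hspos v u h.symm).ne'
      simp only [adjMx, M, Matrix.of_apply, h, if_true]
      field_simp
    · simp [adjMx, M, h]
  · intro y hy hcl
    set K := univ.filter fun v => y v ≠ 0 with hKdef
    have hKc : G.IsClique (K : Set V) := by
      intro u hu v hv huv
      exact hcl u v (by simpa [hKdef] using hu) (by simpa [hKdef] using hv) huv
    by_cases hk : K.card ≤ 1
    · have : y ⬝ᵥ (M *ᵥ y) = 0 := by
        simp only [dotProduct, mulVec, Finset.mul_sum]
        refine Finset.sum_eq_zero fun u _ => Finset.sum_eq_zero fun v _ => ?_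
        by_cases hu : y u = 0
        · simp [hu]
        by_cases hv : y v = 0
        · simp [hv]
        have : u = v := Finset.card_le_one.mp hk u (by simp [hKdef, hu]) v (by simp [hKdef, hv])
        subst this
        simp [M]
      rw [this]; positivity
    · have hk2 : (2 : ℝ) ≤ K.card := by exact_mod_cast (by omega : 2 ≤ K.card)
      set k : ℝ := (K.card : ℝ) with hkdef
      have hw : 0 < 1 - 1 / k := by
        have : 1 / k ≤ 1 / 2 := one_div_le_one_div_of_le (by norm_num) hk2
        linarith
      have hle : ∀ u ∈ K, √(1 - 1 / k) ≤ s u := fun u hu =>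
        Real.sqrt_le_sqrt (one_sub_le G K hKc u hu)
      have hsq : 0 < √(1 - 1 / k) := Real.sqrt_pos.mpr hw
      have hb : y ⬝ᵥ (M *ᵥ y) ≤ ∑ u, ∑ v, (1 - 1 / k)⁻¹ *
          (y u * y v - if u = v then y u * y v else 0) := by
        simp only [dotProduct, mulVec, Finset.mul_sum]
        refine Finset.sum_le_sum fun u _ => Finset.sum_le_sum fun v _ => ?_
        by_cases hu : y u = 0
        · simp [hu]
        by_cases hv : y v = 0
        · simp [hv]
        by_cases huv : u = v
        · subst huv; simp [M]
        have huK : u ∈ K := by simp [hKdef, hu]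
        have hvK : v ∈ K := by simp [hKdef, hv]
        have hadj := hcl u v hu hv huv
        have h1 : (s u)⁻¹ * (s v)⁻¹ ≤ (1 - 1 / k)⁻¹ := by
          rw [← mul_inv]
          apply inv_anti₀ hw
          calc 1 - 1 / k = √(1 - 1 / k) * √(1 - 1 / k) := (Real.mul_self_sqrt hw.le).symm
            _ ≤ s u * s v := mul_le_mul (hle u huK) (hle v hvK) hsq.le (hs0 u)
        simp only [M, Matrix.of_apply, hadj, if_true, huv, if_false, sub_zero]
        have := mul_le_mul_of_nonneg_right h1 (mul_nonneg (hy u) (hy v))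
        linarith
      have he : ∑ u, ∑ v, (1 - 1 / k)⁻¹ * (y u * y v - if u = v then y u * y v else 0)
          = (1 - 1 / k)⁻¹ * ((∑ v, y v) ^ 2 - ∑ v, y v ^ 2) := by
        simp only [← Finset.mul_sum, Finset.sum_sub_distrib, Finset.sum_ite_eq,
          Finset.mem_univ, if_true, sq, Finset.sum_mul_sum]
      have hS1 : ∑ v ∈ K, y v = ∑ v, y v := by
        rw [hKdef]; exact Finset.sum_filter_ne_zero univ
      have hS2 : ∑ v ∈ K, y v ^ 2 ≤ ∑ v, y v ^ 2 :=
        Finset.sum_le_sum_of_subset_of_nonneg (Finset.subset_univ _) fun _ _ _ => sq_nonneg _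
      have hcs : (∑ v, y v) ^ 2 ≤ k * ∑ v, y v ^ 2 := by
        rw [← hS1]
        refine le_trans sq_sum_le_card_mul_sum_sq ?_
        exact mul_le_mul_of_nonneg_left hS2 (by positivity)
      refine hb.trans ?_
      rw [he, inv_mul_le_iff₀ hw]
      have : (∑ v, y v) ^ 2 / k ≤ ∑ v, y v ^ 2 := by
        rw [div_le_iff₀ (by linarith)]; linarith
      have e : (1 - 1 / k) * (∑ v, y v) ^ 2 = (∑ v, y v) ^ 2 - (∑ v, y v) ^ 2 / k := by ring
      rw [e]; linarith

/-- Vertex-localized spectral Turán theorem: `λ₁(G) ≤ ∑_v (1 - 1/c(v))`. -/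
theorem stmt6 {V : Type*} [Fintype V] [DecidableEq V]
    (G : SimpleGraph V) (hconn : G.Connected) :
    lambda1 G ≤ ∑ v, (1 - 1 / (cliqueAt G v : ℝ)) := by
  have hne : Nonempty V := hconn.nonempty
  unfold lambda1 maxEig
  apply ciSup_le
  intro i
  rw [Matrix.IsHermitian.eigenvalues_eq]
  set x : V → ℝ := ⇑((adjMx_isHermitian G).eigenvectorBasis i) with hxdef
  have hx1 : ∑ v, |x v| ^ 2 = 1 := by
    have h := (adjMx_isHermitian G).eigenvectorBasis.orthonormal.1 i
    rw [EuclideanSpace.norm_eq, Real.sqrt_eq_one] at h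
    simpa [hxdef] using h
  have h1 : dotProduct x ((adjMx G).mulVec x) ≤
      dotProduct (fun v => |x v|) ((adjMx G).mulVec fun v => |x v|) := by
    simp only [dotProduct, Matrix.mulVec, Finset.mul_sum]
    refine Finset.sum_le_sum fun u _ => Finset.sum_le_sum fun v _ => ?_
    by_cases h : G.Adj u v
    · simp only [adjMx, Matrix.of_apply, h, if_true, one_mul, ← abs_mul]
      exact le_abs_self _
    · simp [adjMx, h]
  have h2 := quad_le G (fun v => |x v|) fun v => abs_nonneg _
  have h3 := Finset.sum_mul_sq_le_sq_mul_sq univ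
    (fun v => √(1 - 1 / (cliqueAt G v : ℝ))) (fun v => |x v|)
  rw [hx1, mul_one] at h3
  simp only [Real.sq_sqrt (one_sub_nonneg' G _)] at h3
  have h4 := h1.trans (h2.trans h3)
  simpa using h4
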